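/- Let L/K be a finite Galois extension of fields with Galois group G = Gal(L/K). The K-linear map φ : L ⊗_K L → L[G] determined by φ(x ⊗ y) = Σ_{σ ∈ G} σ(x)·y·σ^{-1} is an isomorphism of L-vector spaces (where L acts on L ⊗_K L through the second factor and on L[G] through the coefficients). -/

import Mathlib

open scoped TensorProduct

/-!
Let `r x = ∑ σ, σ(x)·σ⁻¹` be the resolvent of `x`. Up to exchanging the two tensor factors, `φ` is
the `L`-linear extension `y ⊗ x ↦ y • r x` of `r`, so its range is the `L`-span of the resolvents.
In coordinates `r x` is the vector `(τ⁻¹ x)_τ`, and Dedekind's independence of the automorphisms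
says precisely that these vectors span `L^G`. So `φ` is a surjection of `L`-vector spaces, both of
dimension `[L : K] = |G|`.
-/

section Resolvent

variable (K L : Type*) [CommSemiring K]

/-- The resolvent `x ↦ ∑ σ, σ(x)·σ⁻¹` of Galois module theory, with values in the group algebra
`L[Aut(L/K)]`, as a `K`-linear map. It is not related to Mathlib's spectral `resolvent`. -/
noncomputable def galoisResolvent [Semiring L] [Algebra K L] [Fintype (L ≃ₐ[K] L)] :
    L →ₗ[K] MonoidAlgebra L (L ≃ₐ[K] L) :=
  ∑ σ : L ≃ₐ[K] L, MonoidAlgebra.lsingle σ⁻¹ ∘ₗ σ.toLinearMap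

theorem galoisResolvent_apply [Semiring L] [Algebra K L] [Fintype (L ≃ₐ[K] L)] (x : L) :
    galoisResolvent K L x = ∑ σ : L ≃ₐ[K] L, MonoidAlgebra.single σ⁻¹ (σ x) := by
  simp [galoisResolvent]

theorem coeff_galoisResolvent [Semiring L] [Algebra K L] [Fintype (L ≃ₐ[K] L)] (x : L)
    (τ : L ≃ₐ[K] L) : (galoisResolvent K L x).coeff τ = τ⁻¹ x := by
  classical
  simp [galoisResolvent_apply, Finsupp.single_apply, inv_eq_iff_eq_inv]

theorem linearIndependent_coe_algEquiv [CommRing L] [IsDomain L] [Algebra K L] :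
    LinearIndependent L (fun (σ : L ≃ₐ[K] L) (x : L) => σ x) :=
  (linearIndependent_monoidHom L L).comp (fun σ : L ≃ₐ[K] L => (σ : L →* L))
    fun _ _ h => AlgEquiv.ext fun x => DFunLike.congr_fun h x

theorem span_range_galoisResolvent [Field L] [Algebra K L] [Fintype (L ≃ₐ[K] L)] :
    Submodule.span L (Set.range (galoisResolvent K L)) = ⊤ := by
  let coords : MonoidAlgebra L (L ≃ₐ[K] L) ≃ₗ[L] ((L ≃ₐ[K] L) → L) :=
    MonoidAlgebra.coeffLinearEquiv L ≪≫ₗ Finsupp.linearEquivFunOnFinite L L (L ≃ₐ[K] L)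
  have coords_resolvent :
      coords ∘ galoisResolvent K L = flip fun (τ : L ≃ₐ[K] L) (x : L) => τ⁻¹ x := by
    ext x τ
    exact coeff_galoisResolvent K L x τ
  have linearIndependent_inv :
      LinearIndependent L (fun (τ : L ≃ₐ[K] L) (x : L) => τ⁻¹ x) :=
    (linearIndependent_coe_algEquiv K L).comp (·⁻¹) inv_injective
  have span_coords : Submodule.span L (Set.range (coords ∘ galoisResolvent K L)) = ⊤ := by
    rw [coords_resolvent]
    exact span_flip_eq_top_iff_linearIndependent.mpr linearIndependent_inv
  rw [← Submodule.map_eq_top_iff (e := coords), Submodule.map_span, ← Set.range_comp]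
  exact span_coords

theorem liftBaseChange_galoisResolvent_surjective [Field L] [Algebra K L]
    [Fintype (L ≃ₐ[K] L)] :
    Function.Surjective ((galoisResolvent K L).liftBaseChange L) := by
  rw [← LinearMap.range_eq_top, LinearMap.range_liftBaseChange, LinearMap.coe_range]
  exact span_range_galoisResolvent K L

end Resolvent

section Galois

variable (K L : Type*) [Field K] [Field L] [Algebra K L] [FiniteDimensional K L] [IsGalois K L]

theorem finrank_tensorProduct_eq_finrank_monoidAlgebra :
    Module.finrank L (L ⊗[K] L) = Module.finrank L (MonoidAlgebra L (L ≃ₐ[K] L)) :=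
  calc Module.finrank L (L ⊗[K] L)
      = Module.finrank K L := Module.finrank_baseChange
    _ = Nat.card (L ≃ₐ[K] L) := (IsGalois.card_aut_eq_finrank K L).symm
    _ = Module.finrank L (MonoidAlgebra L (L ≃ₐ[K] L)) :=
        (Module.finrank_eq_nat_card_basis (MonoidAlgebra.basis (L ≃ₐ[K] L) L)).symm

theorem liftBaseChange_galoisResolvent_bijective :
    Function.Bijective ((galoisResolvent K L).liftBaseChange L) := by
  have surjective := liftBaseChange_galoisResolvent_surjective K L
  exact ⟨(LinearMap.injective_iff_surjective_of_finrank_eq_finrank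
    (finrank_tensorProduct_eq_finrank_monoidAlgebra K L)).mpr surjective, surjective⟩

/-- The map `φ : x ⊗ y ↦ y • galoisResolvent K L x` of a finite Galois extension. It is typed as a
`K`-linear equivalence because the default `L`-module structure on `L ⊗[K] L` is through the first
factor, not the second. -/
noncomputable def galoisResolventEquiv : L ⊗[K] L ≃ₗ[K] MonoidAlgebra L (L ≃ₐ[K] L) :=
  TensorProduct.comm K L L ≪≫ₗ
    (LinearEquiv.ofBijective _ (liftBaseChange_galoisResolvent_bijective K L)).restrictScalars K

theorem galoisResolventEquiv_tmul (x y : L) :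
    galoisResolventEquiv K L (x ⊗ₜ[K] y) = y • galoisResolvent K L x :=
  rfl

end Galois

/-- Let `L/K` be a finite Galois extension with Galois group `G = Gal(L/K)`.  The map
`φ : L ⊗_K L → L[G]` determined by `φ (x ⊗ y) = ∑_{σ ∈ G} σ(x)·y·σ⁻¹` is an isomorphism
of `L`-vector spaces, where `L` acts on `L ⊗_K L` through the second factor and on the
group algebra `L[G]` through the coefficients (the second clause below records this
`L`-linearity; it is forced by the displayed formula). -/
theorem resolvent_map_isomorphism
    (K L : Type*) [Field K] [Field L] [Algebra K L] [FiniteDimensional K L] [IsGalois K L] :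
    ∃ φ : (L ⊗[K] L) ≃ₗ[K] MonoidAlgebra L (L ≃ₐ[K] L),
      (∀ x y : L,
        φ (x ⊗ₜ[K] y) = ∑ σ : L ≃ₐ[K] L, MonoidAlgebra.single σ⁻¹ (σ x * y)) ∧
      (∀ (c x y : L), φ (x ⊗ₜ[K] (c * y)) = c • φ (x ⊗ₜ[K] y)) := by
  refine ⟨galoisResolventEquiv K L, fun x y => ?_, fun c x y => ?_⟩
  · simp only [galoisResolventEquiv_tmul, galoisResolvent_apply, Finset.smul_sum,
      MonoidAlgebra.smul_single, smul_eq_mul, mul_comm y]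
  · simp only [galoisResolventEquiv_tmul, mul_smul]
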